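/- arXiv:2505.09270 — 3 statements merged into one kernel-verified Lean document; each statement's English description precedes it below -/
import Mathlib

section
/- Let n ≥ 1, ξ ∈ ℝⁿ, and for ℓ ∈ ℕ define the bounded operator Π_ℓ^ξ on L²(ℝⁿ, ℂ) by Π_ℓ^ξ u = Σ_{α ∈ ℕⁿ, |α| = ℓ} (∫_{ℝⁿ} conj(ψ_α^{−ξ}(w))·u(w) dw) · ψ_α^ξ, where ψ_α^ξ(v) = ∏_{j=1}^n φ_{α_j}(v_j + 2iξ_j). Then for all k, ℓ ∈ ℕ, Π_k^ξ ∘ Π_ℓ^ξ = δ_{kℓ} · Π_ℓ^ξ as operators on L²(ℝⁿ, ℂ); that is, the maps Π_ℓ^ξ are projections with mutually annihilating ranges. -/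
open MeasureTheory

/-- The normalized Hermite function `φ_j(z) = (j!·√(2π))^(−1/2)·exp(−z²/4)·F_j(z)`,
extended to an entire function on `ℂ`. -/
noncomputable def hermiteFun (j : ℕ) (z : ℂ) : ℂ :=
  ((((j.factorial : ℝ) * Real.sqrt (2 * Real.pi)) ^ (-(1 : ℝ) / 2) : ℝ) : ℂ) *
    Complex.exp (-z ^ 2 / 4) * Polynomial.aeval z (Polynomial.hermite j)

/-- `ψ_α^ξ(v) = ∏_j φ_{α_j}(v_j + 2iξ_j)`. -/
noncomputable def psiFun {n : ℕ} (α : Fin n → ℕ) (ξ : Fin n → ℝ) (v : Fin n → ℝ) : ℂ :=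
  ∏ j, hermiteFun (α j) ((v j : ℂ) + 2 * Complex.I * (ξ j : ℂ))

/-- The Riesz projection `Π_ℓ^ξ u = Σ_{|α| = ℓ} ⟨ψ_α^{−ξ}, u⟩ ψ_α^ξ`. -/
noncomputable def rieszProj (n : ℕ) (ξ : Fin n → ℝ) (ℓ : ℕ)
    (u : (Fin n → ℝ) → ℂ) : (Fin n → ℝ) → ℂ :=
  fun v => ∑ α ∈ Finset.Nat.antidiagonalTuple n ℓ,
    (∫ w : Fin n → ℝ, (starRingEnd ℂ) (psiFun α (-ξ) w) * u w) * psiFun α ξ v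

/-- the Gaussian times a polynomial along the line `Im z = 2ξ` -/
noncomputable def gaussPoly (t : ℝ) (P : Polynomial ℤ) (x : ℝ) : ℂ :=
  Complex.exp (-((x : ℂ) + 2 * Complex.I * t) ^ 2 / 2) *
    Polynomial.aeval ((x : ℂ) + 2 * Complex.I * t) P

lemma integrable_poly_gauss (Q : Polynomial ℂ) :
    Integrable (fun x : ℝ => Q.eval (x : ℂ) * ((Real.exp (-(1/2) * x ^ 2) : ℝ) : ℂ)) := by
  induction Q using Polynomial.induction_on' with
  | add p q hp hq =>
    simp only [Polynomial.eval_add, add_mul]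
    exact hp.add hq
  | monomial k a =>
    have h := integrable_rpow_mul_exp_neg_mul_sq (b := 1/2) (by norm_num) (s := k)
      (by have : (0:ℝ) ≤ k := Nat.cast_nonneg k
          linarith)
    have h2 := (h.ofReal (𝕜 := ℂ)).const_mul a
    refine h2.congr (Filter.Eventually.of_forall fun x => ?_)
    simp [mul_assoc]

lemma integrable_gaussPoly (t : ℝ) (P : Polynomial ℤ) : Integrable (gaussPoly t P) := by
  have h := integrable_poly_gauss
    ((P.map (algebraMap ℤ ℂ)).comp (Polynomial.X + Polynomial.C (2 * Complex.I * t)))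
  have hb := h.bdd_mul (c := Real.exp (2 * t ^ 2))
    (f := fun x : ℝ => Complex.exp (-(2 * Complex.I * t * x) + 2 * t ^ 2))
    (by
      apply Continuous.aestronglyMeasurable
      fun_prop)
    (by
      refine Filter.Eventually.of_forall fun x => ?_
      rw [Complex.norm_exp]
      apply le_of_eq
      congr 1
      simp [← Complex.ofReal_pow])
  refine hb.congr (Filter.Eventually.of_forall fun x => ?_)
  simp only [gaussPoly, Polynomial.eval_comp, Polynomial.eval_add, Polynomial.eval_X,
    Polynomial.eval_C, Polynomial.aeval_def, Polynomial.eval_map]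
  rw [mul_left_comm, mul_comm, Complex.ofReal_exp, ← Complex.exp_add]
  congr 2
  push_cast
  linear_combination (2 * (t:ℂ)^2) * Complex.I_sq

lemma hasDerivAt_gaussPoly (t : ℝ) (P : Polynomial ℤ) (x : ℝ) :
    HasDerivAt (gaussPoly t P)
      (gaussPoly t (Polynomial.derivative P - Polynomial.X * P) x) x := by
  have hz : HasDerivAt (fun x : ℝ => (x : ℂ) + 2 * Complex.I * t) 1 x :=
    (Complex.ofRealCLM.hasDerivAt (x := x)).add_const _
  have hP := (Polynomial.hasDerivAt_aeval P ((x : ℂ) + 2 * Complex.I * t)).comp x hz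
  have hE := (((hz.pow 2).neg).div_const 2).cexp
  have := hE.mul hP
  refine this.congr_deriv ?_
  simp [gaussPoly]
  ring

lemma integral_gaussPoly_X_mul (t : ℝ) (P : Polynomial ℤ) :
    ∫ x, gaussPoly t (Polynomial.X * P) x = ∫ x, gaussPoly t (Polynomial.derivative P) x := by
  have h := integral_eq_zero_of_hasDerivAt_of_integrable (hasDerivAt_gaussPoly t P)
    (integrable_gaussPoly t _) (integrable_gaussPoly t P)
  have h2 : ∀ x, gaussPoly t (Polynomial.derivative P - Polynomial.X * P) x =
      gaussPoly t (Polynomial.derivative P) x - gaussPoly t (Polynomial.X * P) x := by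
    intro x
    simp only [gaussPoly, map_sub, mul_sub]
  simp only [h2] at h
  rw [integral_sub (integrable_gaussPoly t _) (integrable_gaussPoly t _)] at h
  exact (sub_eq_zero.mp h).symm

lemma integral_gaussPoly_hermite_mul (t : ℝ) (m : ℕ) (P : Polynomial ℤ) :
    ∫ x, gaussPoly t (Polynomial.hermite m * P) x =
      ∫ x, gaussPoly t (Polynomial.derivative^[m] P) x := by
  induction m generalizing P with
  | zero => simp
  | succ m ih =>
    rw [Function.iterate_succ_apply, ← ih]
    have h := integral_gaussPoly_X_mul t (Polynomial.hermite m * P)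
    have h2 : ∀ x, gaussPoly t (Polynomial.hermite (m + 1) * P) x =
        gaussPoly t (Polynomial.X * (Polynomial.hermite m * P)) x -
        gaussPoly t (Polynomial.derivative (Polynomial.hermite m) * P) x := by
      intro x
      simp only [gaussPoly, Polynomial.hermite_succ, map_sub, map_mul]
      ring
    have h3 : ∀ x, gaussPoly t (Polynomial.derivative (Polynomial.hermite m * P)) x =
        gaussPoly t (Polynomial.derivative (Polynomial.hermite m) * P) x +
        gaussPoly t (Polynomial.hermite m * Polynomial.derivative P) x := by
      intro x
      simp only [gaussPoly, Polynomial.derivative_mul, map_add, map_mul]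
      ring
    simp only [h2]
    rw [integral_sub (integrable_gaussPoly t _) (integrable_gaussPoly t _), h]
    simp only [h3]
    rw [integral_add (integrable_gaussPoly t _) (integrable_gaussPoly t _)]
    ring

lemma integral_gaussPoly_one (t : ℝ) :
    ∫ x, gaussPoly t 1 x = ((Real.sqrt (2 * Real.pi) : ℝ) : ℂ) := by
  have h := GaussianFourier.integral_cexp_neg_mul_sq_add_real_mul_I (b := 1/2)
    (by norm_num) (2 * t)
  have h2 : ((Real.pi : ℂ) / (1/2)) ^ (1 / 2 : ℂ) = ((Real.sqrt (2 * Real.pi) : ℝ) : ℂ) := by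
    rw [Real.sqrt_eq_rpow, Complex.ofReal_cpow (by positivity)]
    push_cast
    congr 1
    ring
  rw [← h2, ← h]
  congr 1
  ext x
  simp only [gaussPoly, map_one, mul_one]
  congr 1
  push_cast
  ring

lemma iterate_derivative_hermite_self (m : ℕ) :
    Polynomial.derivative^[m] (Polynomial.hermite m) = Polynomial.C (m.factorial : ℤ) := by
  ext k
  rw [Polynomial.coeff_iterate_derivative, Polynomial.coeff_C]
  rcases Nat.eq_zero_or_pos k with rfl | hk
  · simp [Nat.descFactorial_self]
  · rw [Polynomial.coeff_hermite_of_lt (by omega)]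
    simp [hk.ne']

lemma integral_gaussPoly_hermite (t : ℝ) (a b : ℕ) :
    ∫ x, gaussPoly t (Polynomial.hermite a * Polynomial.hermite b) x =
      if a = b then (((a.factorial : ℝ) * Real.sqrt (2 * Real.pi) : ℝ) : ℂ) else 0 := by
  wlog hab : b ≤ a generalizing a b
  · rw [mul_comm, this b a (by omega), if_neg (by omega), if_neg (by omega)]
  rw [integral_gaussPoly_hermite_mul]
  rcases eq_or_lt_of_le hab with rfl | hlt
  · rw [iterate_derivative_hermite_self, if_pos rfl]
    have : ∀ x, gaussPoly t (Polynomial.C (b.factorial : ℤ)) x =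
        (b.factorial : ℂ) * gaussPoly t 1 x := by
      intro x
      simp [gaussPoly, mul_comm]
    simp only [this]
    rw [integral_const_mul, integral_gaussPoly_one]
    push_cast
    rfl
  · rw [Polynomial.iterate_derivative_eq_zero (by rwa [Polynomial.natDegree_hermite]),
      if_neg (by omega)]
    simp [gaussPoly]

lemma hermiteFun_mul (t : ℝ) (a b : ℕ) (x : ℝ) :
    hermiteFun a ((x : ℂ) + 2 * Complex.I * t) * hermiteFun b ((x : ℂ) + 2 * Complex.I * t) =
    (((((a.factorial : ℝ) * Real.sqrt (2 * Real.pi)) ^ (-(1 : ℝ) / 2) : ℝ) : ℂ) *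
    ((((b.factorial : ℝ) * Real.sqrt (2 * Real.pi)) ^ (-(1 : ℝ) / 2) : ℝ) : ℂ)) *
    gaussPoly t (Polynomial.hermite a * Polynomial.hermite b) x := by
  have : Complex.exp (-((x : ℂ) + 2 * Complex.I * t) ^ 2 / 2) =
      Complex.exp (-((x : ℂ) + 2 * Complex.I * t) ^ 2 / 4) *
      Complex.exp (-((x : ℂ) + 2 * Complex.I * t) ^ 2 / 4) := by
    rw [← Complex.exp_add]
    congr 1
    ring
  simp only [hermiteFun, gaussPoly, this, map_mul]
  ring

lemma integrable_hermiteFun_mul (t : ℝ) (a b : ℕ) :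
    Integrable (fun x : ℝ => hermiteFun a ((x : ℂ) + 2 * Complex.I * t) *
      hermiteFun b ((x : ℂ) + 2 * Complex.I * t)) := by
  simp only [hermiteFun_mul]
  exact (integrable_gaussPoly t _).const_mul _

lemma integral_hermiteFun_mul (t : ℝ) (a b : ℕ) :
    ∫ x : ℝ, hermiteFun a ((x : ℂ) + 2 * Complex.I * t) *
      hermiteFun b ((x : ℂ) + 2 * Complex.I * t) = if a = b then 1 else 0 := by
  simp only [hermiteFun_mul]
  rw [integral_const_mul, integral_gaussPoly_hermite]
  split_ifs with h
  · subst h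
    rw [← Complex.ofReal_mul, ← Complex.ofReal_mul, ← Complex.ofReal_one]
    congr 1
    have hp : 0 < (a.factorial : ℝ) * Real.sqrt (2 * Real.pi) := by positivity
    generalize (a.factorial : ℝ) * Real.sqrt (2 * Real.pi) = y at hp
    rw [← Real.rpow_add hp]
    norm_num
    rw [Real.rpow_neg_one]
    exact inv_mul_cancel₀ hp.ne'
  · simp

lemma conj_hermiteFun (j : ℕ) (z : ℂ) :
    (starRingEnd ℂ) (hermiteFun j z) = hermiteFun j ((starRingEnd ℂ) z) := by
  simp only [hermiteFun, map_mul, Complex.conj_ofReal, ← Complex.exp_conj]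
  congr 1
  · congr 2
    rw [map_div₀, map_neg, map_pow, map_ofNat]
  · rw [Polynomial.aeval_def, Polynomial.aeval_def, Polynomial.hom_eval₂]
    congr 1
    exact RingHom.ext_int _ _

lemma conj_psiFun {n : ℕ} (α : Fin n → ℕ) (ξ v : Fin n → ℝ) :
    (starRingEnd ℂ) (psiFun α (-ξ) v) = psiFun α ξ v := by
  simp only [psiFun, map_prod, conj_hermiteFun]
  refine Finset.prod_congr rfl fun j _ => ?_
  congr 1
  simp
  left
  exact map_ofNat _ 2

lemma integrable_psi_mul {n : ℕ} (α β : Fin n → ℕ) (ξ : Fin n → ℝ) :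
    Integrable (fun w => psiFun α ξ w * psiFun β ξ w) := by
  simp only [psiFun, ← Finset.prod_mul_distrib]
  exact Integrable.fintype_prod
    (f := fun j (x : ℝ) => hermiteFun (α j) ((x : ℂ) + 2 * Complex.I * (ξ j : ℂ)) *
      hermiteFun (β j) ((x : ℂ) + 2 * Complex.I * (ξ j : ℂ)))
    (fun j => integrable_hermiteFun_mul (ξ j) (α j) (β j))

lemma integral_psi_mul {n : ℕ} (α β : Fin n → ℕ) (ξ : Fin n → ℝ) :
    ∫ w, psiFun α ξ w * psiFun β ξ w = if α = β then 1 else 0 := by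
  simp only [psiFun, ← Finset.prod_mul_distrib]
  rw [integral_fintype_prod_volume_eq_prod
    (f := fun j (x : ℝ) => hermiteFun (α j) ((x : ℂ) + 2 * Complex.I * (ξ j : ℂ)) *
      hermiteFun (β j) ((x : ℂ) + 2 * Complex.I * (ξ j : ℂ)))]
  simp only [integral_hermiteFun_mul]
  split_ifs with h
  · subst h
    simp
  · obtain ⟨j, hj⟩ := Function.ne_iff.mp h
    exact Finset.prod_eq_zero (Finset.mem_univ j) (if_neg hj)

/-- `Π_k^ξ ∘ Π_ℓ^ξ = δ_{kℓ} Π_ℓ^ξ` on `L²(ℝⁿ, ℂ)`: the Riesz projections are projections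
with mutually annihilating ranges. -/
theorem stmt_10 (n : ℕ) (hn : 1 ≤ n) (ξ : Fin n → ℝ) (k ℓ : ℕ)
    (u : (Fin n → ℝ) → ℂ) (hu : MemLp u 2) :
    ∀ v : Fin n → ℝ,
      rieszProj n ξ k (rieszProj n ξ ℓ u) v =
        (if k = ℓ then 1 else 0) * rieszProj n ξ ℓ u v := by
  intro v
  have key : ∀ α : Fin n → ℕ,
      ∫ w, (starRingEnd ℂ) (psiFun α (-ξ) w) * rieszProj n ξ ℓ u w =
      if α ∈ Finset.Nat.antidiagonalTuple n ℓ then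
        ∫ w, (starRingEnd ℂ) (psiFun α (-ξ) w) * u w else 0 := by
    intro α
    simp only [conj_psiFun]
    simp only [rieszProj, Finset.mul_sum]
    have h1 : ∀ (w : Fin n → ℝ) (β : Fin n → ℕ) (c : ℂ), psiFun α ξ w * (c * psiFun β ξ w) =
        c * (psiFun α ξ w * psiFun β ξ w) := fun w β c => by ring
    simp only [h1]
    rw [integral_finsetSum _ fun β _ => (integrable_psi_mul α β ξ).const_mul _]
    simp only [integral_const_mul, integral_psi_mul, conj_psiFun]
    simp
  rw [rieszProj]
  simp only [key]
  by_cases h : k = ℓ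
  · subst h
    rw [if_pos rfl, one_mul, rieszProj]
    exact Finset.sum_congr rfl fun α hα => by rw [if_pos hα]
  · rw [if_neg h, zero_mul]
    refine Finset.sum_eq_zero fun α hα => ?_
    rw [if_neg, zero_mul]
    intro h2
    rw [Finset.Nat.mem_antidiagonalTuple] at hα h2
    exact h (hα.symm.trans h2)
end

section
/- Let n ≥ 1, and let α, a, b be real numbers with 0 < α < n, a < n/2, b < n/2 and a + b = α. Then there exists a constant C > 0 such that for all f, g ∈ L²(ℝⁿ), ∫∫_{ℝⁿ×ℝⁿ} |f(x)|·|g(y)| / (|x|^a · |x−y|^{n−α} · |y|^b) dx dy ≤ C·‖f‖_{L²}·‖g‖_{L²}. That is, the integral operator with the homogeneous kernel |x|^{−a}|x−y|^{−(n−α)}|y|^{−b} is bounded on L²(ℝⁿ). -/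
open MeasureTheory

lemma aux_fin (n : ℕ) (hn : 1 ≤ n) (β γ : ℝ) (hβ : β < n) (hβγ : n < β + γ) :
    ∫⁻ z : EuclideanSpace ℝ (Fin n), ENNReal.ofReal (‖z‖ ^ (-β) * (max ‖z‖ 1) ^ (-γ)) ≠ ⊤ := by
  haveI : Nonempty (Fin n) := ⟨⟨0, hn⟩⟩
  have key : Integrable (fun z : EuclideanSpace ℝ (Fin n) =>
      ‖z‖ ^ (-β) * (max ‖z‖ 1) ^ (-γ)) volume := by
    rw [integrable_fun_norm_addHaar (volume : Measure (EuclideanSpace ℝ (Fin n)))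
      (f := fun r : ℝ => r ^ (-β) * (max r 1) ^ (-γ))]
    have e : Set.Ioi (0 : ℝ) = Set.Ioc 0 1 ∪ Set.Ioi 1 := by
      rw [Set.Ioc_union_Ioi_eq_Ioi zero_le_one]
    have hpow : ∀ r : ℝ, 0 < r → r ^ (n - 1) * r ^ (-β) = r ^ ((n : ℝ) - 1 - β) := by
      intro r hr
      rw [← Real.rpow_natCast, ← Real.rpow_add hr, Nat.cast_sub hn]
      congr 1; push_cast; ring
    rw [e, finrank_euclideanSpace, Fintype.card_fin]
    refine IntegrableOn.union ?_ ?_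
    · have h1 : IntegrableOn (fun r : ℝ => r ^ ((n : ℝ) - 1 - β)) (Set.Ioc 0 1) volume := by
        have := intervalIntegral.intervalIntegrable_rpow' (a := 0) (b := 1)
          (r := (n : ℝ) - 1 - β) (by linarith)
        rwa [intervalIntegrable_iff_integrableOn_Ioc_of_le zero_le_one] at this
      refine h1.congr_fun ?_ measurableSet_Ioc
      intro r hr
      simp only [smul_eq_mul]
      rw [max_eq_right hr.2, Real.one_rpow, mul_one, hpow r hr.1]
    · have h1 : IntegrableOn (fun r : ℝ => r ^ ((n : ℝ) - 1 - β - γ)) (Set.Ioi 1) volume :=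
        integrableOn_Ioi_rpow_of_lt (by linarith) zero_lt_one
      refine h1.congr_fun ?_ measurableSet_Ioi
      intro r hr
      have hr' : (1 : ℝ) < r := hr
      have hr0 : 0 < r := by linarith
      simp only [smul_eq_mul]
      rw [max_eq_left hr'.le, ← mul_assoc, hpow r hr0, ← Real.rpow_add hr0]
      congr 1
  have := key.lintegral_lt_top
  exact this.ne

lemma aux_scale (n : ℕ) (β γ : ℝ) (r : ℝ) (hr : 0 < r) :
    ∫⁻ z : EuclideanSpace ℝ (Fin n), ENNReal.ofReal (‖z‖ ^ (-β) * (max ‖z‖ r) ^ (-γ)) =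
    ENNReal.ofReal (r ^ ((n : ℝ) - β - γ)) *
    ∫⁻ z : EuclideanSpace ℝ (Fin n), ENNReal.ofReal (‖z‖ ^ (-β) * (max ‖z‖ 1) ^ (-γ)) := by
  set Φ : EuclideanSpace ℝ (Fin n) → ENNReal :=
    fun z => ENNReal.ofReal (‖z‖ ^ (-β) * (max ‖z‖ r) ^ (-γ)) with hΦ
  have hm : Measurable Φ := by rw [hΦ]; fun_prop
  have h1 : ∫⁻ z, Φ z ∂(Measure.map (fun x => r • x) volume) = ∫⁻ z, Φ (r • z) :=
    lintegral_map hm (by fun_prop)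
  rw [Measure.map_addHaar_smul _ hr.ne', lintegral_smul_measure] at h1
  have h2 : ∀ z, Φ (r • z) = ENNReal.ofReal (r ^ (-β - γ)) *
      ENNReal.ofReal (‖z‖ ^ (-β) * (max ‖z‖ 1) ^ (-γ)) := by
    intro z
    rw [← ENNReal.ofReal_mul (by positivity)]
    simp only [hΦ]
    have : max ‖r • z‖ r = r * max ‖z‖ 1 := by
      rw [norm_smul, Real.norm_of_nonneg hr.le, mul_max_of_nonneg _ _ hr.le, mul_one]
    rw [this, norm_smul, Real.norm_of_nonneg hr.le, Real.mul_rpow hr.le (norm_nonneg _),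
      Real.mul_rpow hr.le (by positivity), sub_eq_add_neg (-β) γ, Real.rpow_add hr]
    congr 1; ring
  simp_rw [h2] at h1
  rw [lintegral_const_mul _ (by fun_prop), finrank_euclideanSpace, Fintype.card_fin,
    smul_eq_mul] at h1
  have h3 : ENNReal.ofReal (r ^ n) * ENNReal.ofReal |(r ^ n)⁻¹| = 1 := by
    rw [← ENNReal.ofReal_mul (by positivity), abs_of_pos (by positivity),
      mul_inv_cancel₀ (by positivity), ENNReal.ofReal_one]
  have h4 : ENNReal.ofReal (r ^ n) * ENNReal.ofReal (r ^ (-β - γ)) =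
      ENNReal.ofReal (r ^ ((n : ℝ) - β - γ)) := by
    rw [← ENNReal.ofReal_mul (by positivity), ← Real.rpow_natCast, ← Real.rpow_add hr]
    congr 2; ring
  calc ∫⁻ z, Φ z = ENNReal.ofReal (r ^ n) * (ENNReal.ofReal |(r ^ n)⁻¹| * ∫⁻ z, Φ z) := by
        rw [← mul_assoc, h3, one_mul]
    _ = _ := by rw [h1, ← mul_assoc, h4]

lemma aux_pt {u v r β γ : ℝ} (hu : 0 ≤ u) (hv : 0 ≤ v) (hr : 0 < r) (h : 2 * r ≤ u + v)
    (hγ : 0 < γ) (huv : u ≤ v) :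
    u ^ (-β) * v ^ (-γ) ≤ u ^ (-β) * (max u r) ^ (-γ) := by
  refine mul_le_mul_of_nonneg_left ?_ (by positivity)
  refine Real.rpow_le_rpow_of_nonpos (by positivity) (max_le huv (by linarith)) (by linarith)

lemma aux_conv (n : ℕ) (hn : 1 ≤ n) (β γ : ℝ) (hβ : β < n) (hγ : γ < n) (hβ0 : 0 < β)
    (hγ0 : 0 < γ) (hβγ : n < β + γ) :
    ∃ A : ENNReal, A ≠ ⊤ ∧ ∀ x : EuclideanSpace ℝ (Fin n), x ≠ 0 →
      ∫⁻ y, ENNReal.ofReal (‖x - y‖ ^ (-β) * ‖y‖ ^ (-γ)) ≤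
        ENNReal.ofReal (‖x‖ ^ ((n : ℝ) - β - γ)) * A := by
  refine ⟨ENNReal.ofReal ((1/2 : ℝ) ^ ((n : ℝ) - β - γ)) *
    ((∫⁻ z : EuclideanSpace ℝ (Fin n), ENNReal.ofReal (‖z‖ ^ (-β) * (max ‖z‖ 1) ^ (-γ))) +
    ∫⁻ z : EuclideanSpace ℝ (Fin n), ENNReal.ofReal (‖z‖ ^ (-γ) * (max ‖z‖ 1) ^ (-β))), ?_, ?_⟩
  · exact ENNReal.mul_ne_top ENNReal.ofReal_ne_top (ENNReal.add_ne_top.2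
      ⟨aux_fin n hn β γ hβ hβγ, aux_fin n hn γ β hγ (by linarith)⟩)
  intro x hx
  have hx' : 0 < ‖x‖ := norm_pos_iff.2 hx
  set r := ‖x‖ * (1/2) with hr
  have hr0 : 0 < r := by positivity
  have hrp : ENNReal.ofReal (r ^ ((n : ℝ) - β - γ)) = ENNReal.ofReal (‖x‖ ^ ((n : ℝ) - β - γ)) *
      ENNReal.ofReal ((1/2 : ℝ) ^ ((n : ℝ) - β - γ)) := by
    rw [← ENNReal.ofReal_mul (by positivity), hr, Real.mul_rpow hx'.le (by norm_num)]
  rw [← mul_assoc, ← hrp, mul_add]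
  have s2 := aux_scale n γ β r hr0
  rw [show (n : ℝ) - γ - β = n - β - γ by ring] at s2
  rw [← aux_scale n β γ r hr0, ← s2]
  rw [← lintegral_sub_left_eq_self (fun z : EuclideanSpace ℝ (Fin n) =>
    ENNReal.ofReal (‖z‖ ^ (-β) * (max ‖z‖ r) ^ (-γ))) x]
  rw [← lintegral_add_left (by fun_prop)]
  refine lintegral_mono fun y => ?_
  have htri : 2 * r ≤ ‖x - y‖ + ‖y‖ := by
    have := norm_add_le (x - y) y
    rw [sub_add_cancel] at this
    rw [hr]; linarith
  rcases le_total ‖x - y‖ ‖y‖ with h | h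
  · refine le_trans (ENNReal.ofReal_le_ofReal ?_) le_self_add
    exact aux_pt (norm_nonneg _) (norm_nonneg _) hr0 htri hγ0 h
  · refine le_trans (ENNReal.ofReal_le_ofReal ?_) le_add_self
    rw [mul_comm]
    exact aux_pt (norm_nonneg _) (norm_nonneg _) hr0 (by linarith) hβ0 h

/-- The weighted kernel of the Schur test. -/
noncomputable def schurW (n : ℕ) (α a b : ℝ) (x y : EuclideanSpace ℝ (Fin n)) : ℝ :=
  ‖x‖ ^ ((n : ℝ) / 2 - a) * (‖x - y‖ ^ (-((n : ℝ) - α)) * ‖y‖ ^ (-(b + (n : ℝ) / 2)))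

lemma schurW_nonneg (n : ℕ) (α a b : ℝ) (x y : EuclideanSpace ℝ (Fin n)) :
    0 ≤ schurW n α a b x y := by unfold schurW; positivity

lemma schur_inner (n : ℕ) (hn : 1 ≤ n) (α a b : ℝ)
    (hα0 : 0 < α) (hαn : α < n) (ha : a < n / 2) (hb : b < n / 2) (hab : a + b = α) :
    ∃ A : ENNReal, A ≠ ⊤ ∧ ∀ x : EuclideanSpace ℝ (Fin n), x ≠ 0 →
      ∫⁻ y, ENNReal.ofReal (schurW n α a b x y) ≤ A := by
  obtain ⟨A, hA, h⟩ := aux_conv n hn (n - α) (b + n / 2) (by linarith) (by linarith)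
    (by linarith) (by linarith) (by linarith)
  refine ⟨A, hA, fun x hx => ?_⟩
  have hx' : 0 < ‖x‖ := norm_pos_iff.2 hx
  simp only [schurW]
  simp_rw [ENNReal.ofReal_mul (Real.rpow_nonneg (norm_nonneg x) _)]
  rw [lintegral_const_mul _ (by fun_prop)]
  refine (mul_le_mul_right (h x hx) _).trans ?_
  rw [← mul_assoc, ← ENNReal.ofReal_mul (by positivity), ← Real.rpow_add hx']
  rw [show (n : ℝ) / 2 - a + (n - (n - α) - (b + n / 2)) = 0 by linarith]
  simp

lemma schur_half (n : ℕ) (hn : 1 ≤ n) (α a b : ℝ) (A : ENNReal) (hA' : A ≠ ⊤)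
    (hA : ∀ x : EuclideanSpace ℝ (Fin n), x ≠ 0 →
      ∫⁻ y, ENNReal.ofReal (schurW n α a b x y) ≤ A)
    (f : EuclideanSpace ℝ (Fin n) → ℂ) :
    ∫⁻ x, ∫⁻ y, (‖f x‖ₑ * ENNReal.ofReal (√(schurW n α a b x y))) ^ (2 : ℝ) ≤
      A * ∫⁻ x, ‖f x‖ₑ ^ (2 : ℝ) := by
  haveI : Nonempty (Fin n) := ⟨⟨0, hn⟩⟩
  have hm : ∀ x, Measurable fun y => ENNReal.ofReal (schurW n α a b x y) := by
    intro x; unfold schurW; fun_prop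
  rw [← lintegral_const_mul' _ _ hA']
  refine lintegral_mono_ae ?_
  filter_upwards [Measure.ae_ne volume (0 : EuclideanSpace ℝ (Fin n))] with x hx
  have : ∀ y, (‖f x‖ₑ * ENNReal.ofReal (√(schurW n α a b x y))) ^ (2 : ℝ) =
      ‖f x‖ₑ ^ (2 : ℝ) * ENNReal.ofReal (schurW n α a b x y) := by
    intro y
    rw [ENNReal.mul_rpow_of_nonneg _ _ (by norm_num),
      ENNReal.ofReal_rpow_of_nonneg (Real.sqrt_nonneg _) (by norm_num), Real.rpow_two,
      Real.sq_sqrt (schurW_nonneg ..)]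
  simp_rw [this]
  rw [lintegral_const_mul _ (hm x), mul_comm]
  exact mul_le_mul_left (hA x hx) _

lemma schur_pt (n : ℕ) (α a b : ℝ) (x y : EuclideanSpace ℝ (Fin n)) (hx : x ≠ 0) (hy : y ≠ 0) :
    √(schurW n α a b x y) * √(schurW n α b a y x) =
    (‖x‖ ^ a * ‖x - y‖ ^ ((n : ℝ) - α) * ‖y‖ ^ b)⁻¹ := by
  have hx' : 0 < ‖x‖ := norm_pos_iff.2 hx
  have hy' : 0 < ‖y‖ := norm_pos_iff.2 hy
  rw [← Real.sqrt_mul (schurW_nonneg ..)]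
  rw [Real.sqrt_eq_iff_mul_self_eq (mul_nonneg (schurW_nonneg ..) (schurW_nonneg ..))
    (by positivity)]
  unfold schurW
  rw [norm_sub_rev y x, mul_inv, mul_inv, ← Real.rpow_neg (norm_nonneg _),
    ← Real.rpow_neg (norm_nonneg _), ← Real.rpow_neg (norm_nonneg _)]
  have e1 : ‖x‖ ^ ((n : ℝ) / 2 - a) * ‖x‖ ^ (-(a + (n : ℝ) / 2)) = ‖x‖ ^ (-a) * ‖x‖ ^ (-a) := by
    rw [← Real.rpow_add hx', ← Real.rpow_add hx']; congr 1; ring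
  have e2 : ‖y‖ ^ ((n : ℝ) / 2 - b) * ‖y‖ ^ (-(b + (n : ℝ) / 2)) = ‖y‖ ^ (-b) * ‖y‖ ^ (-b) := by
    rw [← Real.rpow_add hy', ← Real.rpow_add hy']; congr 1; ring
  set D := ‖x - y‖ ^ (-((n : ℝ) - α))
  linear_combination (D * D * ‖y‖ ^ ((n : ℝ) / 2 - b) * ‖y‖ ^ (-(b + (n : ℝ) / 2))) * e1
    + (D * D * (‖x‖ ^ (-a) * ‖x‖ ^ (-a))) * e2

/-- Boundedness on `L²(ℝⁿ)` of the integral operator with homogeneous kernel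
`|x|^{−a}|x−y|^{−(n−α)}|y|^{−b}`, for `0 < α < n`, `a, b < n/2`, `a + b = α`. -/
theorem stmt_11 (n : ℕ) (hn : 1 ≤ n) (α a b : ℝ)
    (hα0 : 0 < α) (hαn : α < n) (ha : a < n / 2) (hb : b < n / 2) (hab : a + b = α) :
    ∃ C > (0 : ℝ), ∀ f g : EuclideanSpace ℝ (Fin n) → ℂ,
      MemLp f 2 → MemLp g 2 →
      (∫⁻ p : EuclideanSpace ℝ (Fin n) × EuclideanSpace ℝ (Fin n),
          ENNReal.ofReal (‖f p.1‖ * ‖g p.2‖ /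
            (‖p.1‖ ^ a * ‖p.1 - p.2‖ ^ ((n : ℝ) - α) * ‖p.2‖ ^ b))) ≤
        ENNReal.ofReal C * eLpNorm f 2 volume * eLpNorm g 2 volume := by
  haveI : Nonempty (Fin n) := ⟨⟨0, hn⟩⟩
  obtain ⟨A, hA, hA'⟩ := schur_inner n hn α a b hα0 hαn ha hb hab
  obtain ⟨B, hB, hB'⟩ := schur_inner n hn α b a hα0 hαn hb ha (by linarith)
  set D : ENNReal := A ^ (1 / 2 : ℝ) * B ^ (1 / 2 : ℝ) with hD
  have hDt : D ≠ ⊤ := ENNReal.mul_ne_top (ENNReal.rpow_ne_top_of_nonneg (by norm_num) hA)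
    (ENNReal.rpow_ne_top_of_nonneg (by norm_num) hB)
  refine ⟨D.toReal + 1, by positivity, fun f g hf hg => ?_⟩
  have hDC : D ≤ ENNReal.ofReal (D.toReal + 1) := by
    rw [← ENNReal.ofReal_toReal hDt]
    refine ENNReal.ofReal_le_ofReal ?_
    rw [ENNReal.ofReal_toReal hDt]; linarith
  set F : EuclideanSpace ℝ (Fin n) × EuclideanSpace ℝ (Fin n) → ENNReal :=
    fun p => ‖f p.1‖ₑ * ENNReal.ofReal (√(schurW n α a b p.1 p.2)) with hF
  set G : EuclideanSpace ℝ (Fin n) × EuclideanSpace ℝ (Fin n) → ENNReal :=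
    fun p => ‖g p.2‖ₑ * ENNReal.ofReal (√(schurW n α b a p.2 p.1)) with hG
  have hFm : AEMeasurable F (volume.prod volume) := by
    refine AEMeasurable.mul (hf.1.enorm.comp_fst) (Measurable.aemeasurable ?_)
    unfold schurW; fun_prop
  have hGm : AEMeasurable G (volume.prod volume) := by
    refine AEMeasurable.mul (hg.1.enorm.comp_snd) (Measurable.aemeasurable ?_)
    unfold schurW; fun_prop
  have h0 := Measure.ae_ne volume (0 : EuclideanSpace ℝ (Fin n))
  have hpt : (fun p : EuclideanSpace ℝ (Fin n) × EuclideanSpace ℝ (Fin n) =>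
      ENNReal.ofReal (‖f p.1‖ * ‖g p.2‖ /
            (‖p.1‖ ^ a * ‖p.1 - p.2‖ ^ ((n : ℝ) - α) * ‖p.2‖ ^ b)))
      =ᵐ[volume.prod volume] F * G := by
    filter_upwards [Measure.quasiMeasurePreserving_fst.ae h0,
      Measure.quasiMeasurePreserving_snd.ae h0] with p h1 h2
    simp only [Pi.mul_apply, hF, hG]
    rw [div_eq_mul_inv, ← schur_pt n α a b p.1 p.2 h1 h2, ← ofReal_norm_eq_enorm,
      ← ofReal_norm_eq_enorm, ← ENNReal.ofReal_mul (norm_nonneg _),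
      ← ENNReal.ofReal_mul (norm_nonneg _), ← ENNReal.ofReal_mul (by positivity)]
    congr 1; ring
  rw [Measure.volume_eq_prod, lintegral_congr_ae hpt]
  refine (ENNReal.lintegral_mul_le_Lp_mul_Lq _ Real.HolderConjugate.two_two hFm hGm).trans ?_
  rw [lintegral_prod _ (hFm.pow_const _), lintegral_prod_symm _ (hGm.pow_const _)]
  have i1 := schur_half n hn α a b A hA hA' f
  have i2 := schur_half n hn α b a B hB hB' g
  rw [eLpNorm_eq_lintegral_rpow_enorm_toReal (by norm_num) (by norm_num),
    eLpNorm_eq_lintegral_rpow_enorm_toReal (by norm_num) (by norm_num), ENNReal.toReal_ofNat]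
  refine (mul_le_mul' (ENNReal.rpow_le_rpow i1 (by norm_num))
    (ENNReal.rpow_le_rpow i2 (by norm_num))).trans ?_
  rw [ENNReal.mul_rpow_of_nonneg _ _ (by norm_num), ENNReal.mul_rpow_of_nonneg _ _ (by norm_num)]
  calc _ = D * (∫⁻ x, ‖f x‖ₑ ^ (2 : ℝ)) ^ (1 / 2 : ℝ) * (∫⁻ x, ‖g x‖ₑ ^ (2 : ℝ)) ^ (1 / 2 : ℝ) := by
        rw [hD]; ring
    _ ≤ _ := by gcongr
end

section
/- Let n ≥ 3 and k ∈ ℕ with 2k + 2 < n. Let s, s' ∈ ℝ satisfy s > (4−n)/2 + 2k, s' > (4−n)/2 + 2k, and s + s' ≥ 2k + 2. Then there exists a constant C > 0 such that for all f, g ∈ L²(ℝⁿ), ∫∫_{ℝⁿ×ℝⁿ} |f(x)|·|g(y)| / (⟨x⟩^{s'} · |x−y|^{n−2−2k} · ⟨y⟩^{s}) dx dy ≤ C·‖f‖_{L²}·‖g‖_{L²}. That is, the operator ⟨x⟩^{−s'} A_{2k} ⟨x⟩^{−s}, where A_{2k} has integral kernel proportional to |x−y|^{2k−(n−2)}, is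 bounded on L²(ℝⁿ). -/
open MeasureTheory

lemma aux_in (n : ℕ) (hn : 3 ≤ n) (c : ℝ) (hc : c < n) :
    Integrable (fun y : EuclideanSpace ℝ (Fin n) => (Set.Iio (2:ℝ)).indicator (fun r : ℝ => r ^ (-c)) ‖y‖) := by
  have : Nontrivial (EuclideanSpace ℝ (Fin n)) := by
    apply Module.nontrivial_of_finrank_pos (R := ℝ); simp; omega
  rw [integrable_fun_norm_addHaar volume (f := (Set.Iio (2:ℝ)).indicator (fun r : ℝ => r ^ (-c)))]
  have h1 : IntegrableOn (fun r : ℝ => r ^ ((n:ℝ) - 1 - c)) (Set.Ioo 0 2) := by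
    rw [intervalIntegral.integrableOn_Ioo_rpow_iff (by norm_num)]; linarith
  rw [← integrable_indicator_iff measurableSet_Ioo] at h1
  rw [← integrable_indicator_iff measurableSet_Ioi]
  refine h1.congr (Filter.Eventually.of_forall fun r => ?_)
  by_cases h0 : 0 < r
  · by_cases h2 : r < 2
    · simp only [Set.indicator, Set.mem_Ioo, Set.mem_Ioi, Set.mem_Iio, h0, h2, and_self, if_true, smul_eq_mul]
      rw [← Real.rpow_natCast, ← Real.rpow_add h0]
      congr 1
      rw [finrank_euclideanSpace, Fintype.card_fin, Nat.cast_sub (by omega)]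
      push_cast; ring
    · simp [Set.indicator, h2]
  · simp [Set.indicator, h0]

lemma aux_out (n : ℕ) (hn : 3 ≤ n) (c : ℝ) (hc : n < c) :
    Integrable (fun y : EuclideanSpace ℝ (Fin n) => (Set.Ioi (1:ℝ)).indicator (fun r : ℝ => r ^ (-c)) ‖y‖) := by
  have : Nontrivial (EuclideanSpace ℝ (Fin n)) := by
    apply Module.nontrivial_of_finrank_pos (R := ℝ); simp; omega
  rw [integrable_fun_norm_addHaar volume (f := (Set.Ioi (1:ℝ)).indicator (fun r : ℝ => r ^ (-c)))]
  have h1 : IntegrableOn (fun r : ℝ => r ^ ((n:ℝ) - 1 - c)) (Set.Ioi 1) :=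
    integrableOn_Ioi_rpow_of_lt (by linarith) (by norm_num)
  rw [← integrable_indicator_iff measurableSet_Ioi] at h1
  rw [← integrable_indicator_iff measurableSet_Ioi]
  refine h1.congr (Filter.Eventually.of_forall fun r => ?_)
  by_cases h2 : 1 < r
  · have h0 : 0 < r := by linarith
    simp only [Set.indicator, Set.mem_Ioi, h0, h2, if_true, smul_eq_mul]
    rw [← Real.rpow_natCast, ← Real.rpow_add h0]
    congr 1
    rw [finrank_euclideanSpace, Fintype.card_fin, Nat.cast_sub (by omega)]
    push_cast; ring
  · simp [Set.indicator, h2]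

lemma aux_scale_s12 (n : ℕ) (h : ℝ → ℝ) (hh : ∀ r, 0 ≤ r → 0 ≤ h r)
    (hi : Integrable (fun y : EuclideanSpace ℝ (Fin n) => h ‖y‖)) (R : ℝ) (hR : 0 < R)
    (x : EuclideanSpace ℝ (Fin n)) :
    ∫⁻ y : EuclideanSpace ℝ (Fin n), ENNReal.ofReal (h (‖x - y‖ / R)) =
      ENNReal.ofReal (R ^ n * ∫ y : EuclideanSpace ℝ (Fin n), h ‖y‖) := by
  have e1 : ∀ y : EuclideanSpace ℝ (Fin n), ‖y‖ / R = ‖R⁻¹ • y‖ := fun y => by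
    rw [norm_smul, norm_inv, Real.norm_of_nonneg hR.le, div_eq_inv_mul]
  simp_rw [e1]
  rw [lintegral_sub_left_eq_self (fun y => ENNReal.ofReal (h ‖R⁻¹ • y‖)) x,
    ← ofReal_integral_eq_lintegral_ofReal]
  · rw [Measure.integral_comp_inv_smul_of_nonneg volume (fun y => h ‖y‖) hR.le]
    simp
  · exact hi.comp_smul (inv_ne_zero hR.ne')
  · exact Filter.Eventually.of_forall fun y => hh _ (norm_nonneg _)

lemma schur {E : Type*} [MeasurableSpace E] (μ : Measure E) [SFinite μ]
    (F G : E → ENNReal) (hF : AEMeasurable F μ) (hG : AEMeasurable G μ)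
    (P Q : E × E → ENNReal) (hP : Measurable P) (hQ : Measurable Q) (A B : ENNReal)
    (hPA : ∀ x, ∫⁻ y, P (x, y) ^ (2:ℝ) ∂μ ≤ A) (hQA : ∀ y, ∫⁻ x, Q (x, y) ^ (2:ℝ) ∂μ ≤ B) :
    ∫⁻ p, (F p.1 * P p) * (G p.2 * Q p) ∂(μ.prod μ) ≤
      (A * ∫⁻ x, F x ^ (2:ℝ) ∂μ) ^ (1/(2:ℝ)) * (B * ∫⁻ x, G x ^ (2:ℝ) ∂μ) ^ (1/(2:ℝ)) := by
  have mF : AEMeasurable (fun p : E × E => F p.1 * P p) (μ.prod μ) :=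
    (hF.comp_quasiMeasurePreserving Measure.quasiMeasurePreserving_fst).mul hP.aemeasurable
  have mG : AEMeasurable (fun p : E × E => G p.2 * Q p) (μ.prod μ) :=
    (hG.comp_quasiMeasurePreserving Measure.quasiMeasurePreserving_snd).mul hQ.aemeasurable
  refine (ENNReal.lintegral_mul_le_Lp_mul_Lq (μ.prod μ) Real.HolderConjugate.two_two mF mG).trans ?_
  gcongr
  · rw [lintegral_prod _ (mF.pow_const _), ← lintegral_const_mul'' _ (hF.pow_const _)]
    refine lintegral_mono fun x => ?_
    simp only [ENNReal.mul_rpow_of_nonneg _ _ (zero_le_two (α := ℝ))]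
    rw [lintegral_const_mul _ (by fun_prop), mul_comm]
    gcongr
    exact hPA x
  · rw [lintegral_prod_symm _ (mG.pow_const _), ← lintegral_const_mul'' _ (hG.pow_const _)]
    refine lintegral_mono fun x => ?_
    simp only [ENNReal.mul_rpow_of_nonneg _ _ (zero_le_two (α := ℝ))]
    rw [lintegral_const_mul _ (by fun_prop), mul_comm]
    gcongr
    exact hQA x

lemma aux_pow (J u b : ℝ) (hu : 0 < u) (hb : 0 < b) (h : u ^ 2 ≤ J) : J ^ (-(b/2)) ≤ u ^ (-b) := by
  have e : u ^ (-b) = (u ^ 2) ^ (-(b/2)) := by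
    rw [← Real.rpow_natCast, ← Real.rpow_mul hu.le]; congr 1; push_cast; ring
  rw [e]
  exact Real.rpow_le_rpow_of_nonpos (by positivity) h (by linarith)

lemma aux_point (a b D t R J : ℝ) (ha : 0 < a) (hb : 0 < b) (hD : 0 ≤ D) (ht : 0 < t) (hR : 0 < R)
    (hJ : t ^ 2 ≤ J) (h1 : D ≤ R / 4 → (R / 4) ^ 2 ≤ J) (h3 : 2 * R ≤ t → t / 2 ≤ D) :
    D ^ (-a) * J ^ (-(b/2)) ≤ 4 ^ a * 4 ^ b * R ^ (-(a + b)) *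
      ((Set.Iio (2:ℝ)).indicator (fun r : ℝ => r ^ (-a)) (D / R) +
       (Set.Iio (2:ℝ)).indicator (fun r : ℝ => r ^ (-b)) (t / R) +
       (Set.Ioi (1:ℝ)).indicator (fun r : ℝ => r ^ (-(a+b))) (t / R)) := by
  have i1 : 0 ≤ (Set.Iio (2:ℝ)).indicator (fun r : ℝ => r ^ (-a)) (D / R) :=
    Set.indicator_apply_nonneg fun _ => by positivity
  have i2 : 0 ≤ (Set.Iio (2:ℝ)).indicator (fun r : ℝ => r ^ (-b)) (t / R) :=
    Set.indicator_apply_nonneg fun _ => by positivity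
  have i3 : 0 ≤ (Set.Ioi (1:ℝ)).indicator (fun r : ℝ => r ^ (-(a+b))) (t / R) :=
    Set.indicator_apply_nonneg fun _ => by positivity
  have hJ0 : 0 < J := lt_of_lt_of_le (by positivity) hJ
  have hM : 0 < (4:ℝ) ^ a * 4 ^ b * R ^ (-(a + b)) := by positivity
  have f4a : (1:ℝ) ≤ 4 ^ a := Real.one_le_rpow (by norm_num) ha.le
  have f4b : (1:ℝ) ≤ 4 ^ b := Real.one_le_rpow (by norm_num) hb.le
  have q : ∀ c : ℝ, ∀ v : ℝ, 0 ≤ v → (v / R) ^ (-c) = v ^ (-c) * R ^ c := fun c v hv => by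
    rw [Real.div_rpow hv hR.le, Real.rpow_neg hR.le, div_inv_eq_mul]
  have q4 : ∀ c : ℝ, (R / 4) ^ (-c) = 4 ^ c * R ^ (-c) := fun c => by
    rw [Real.div_rpow hR.le (by norm_num), Real.rpow_neg (x := 4) (by norm_num), div_inv_eq_mul, mul_comm]
  have q2 : ∀ c : ℝ, (t / 2) ^ (-c) = 2 ^ c * t ^ (-c) := fun c => by
    rw [Real.div_rpow ht.le (by norm_num), Real.rpow_neg (x := 2) (by norm_num), div_inv_eq_mul, mul_comm]
  have rr : ∀ c : ℝ, R ^ (-c) * R ^ c = 1 := fun c => by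
    rw [← Real.rpow_add hR]; simp
  have rab : R ^ (-(a+b)) = R ^ (-a) * R ^ (-b) := by
    rw [← Real.rpow_add hR]; congr 1; ring
  have tab : t ^ (-(a+b)) = t ^ (-a) * t ^ (-b) := by
    rw [← Real.rpow_add ht]; congr 1; ring
  have hJt := aux_pow J t b ht hb hJ
  by_cases c1 : D ≤ R / 4
  · have e1 : (Set.Iio (2:ℝ)).indicator (fun r : ℝ => r ^ (-a)) (D / R) = D ^ (-a) * R ^ a := by
      rw [Set.indicator_of_mem, q a D hD]
      rw [Set.mem_Iio, div_lt_iff₀ hR]; linarith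
    have e2 := aux_pow J (R/4) b (by positivity) hb (h1 c1)
    rw [q4] at e2
    calc D ^ (-a) * J ^ (-(b/2)) ≤ D ^ (-a) * (4 ^ b * R ^ (-b)) := by gcongr
      _ = 1 * 4 ^ b * R ^ (-(a + b)) * (D ^ (-a) * R ^ a) := by
          rw [rab]; linear_combination (-(D ^ (-a) * (4 ^ b * R ^ (-b)))) * rr a
      _ ≤ 4 ^ a * 4 ^ b * R ^ (-(a + b)) * (D ^ (-a) * R ^ a) := by gcongr
      _ ≤ _ := by
          rw [← e1]; apply mul_le_mul_of_nonneg_left _ hM.le; linarith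
  · push Not at c1
    by_cases c2 : t < 2 * R
    · have e1 : (Set.Iio (2:ℝ)).indicator (fun r : ℝ => r ^ (-b)) (t / R) = t ^ (-b) * R ^ b := by
        rw [Set.indicator_of_mem, q b t ht.le]
        rw [Set.mem_Iio, div_lt_iff₀ hR]; linarith
      have e2 : D ^ (-a) ≤ (R/4) ^ (-a) :=
        Real.rpow_le_rpow_of_nonpos (by positivity) c1.le (by linarith)
      rw [q4] at e2
      calc D ^ (-a) * J ^ (-(b/2)) ≤ (4 ^ a * R ^ (-a)) * t ^ (-b) := by gcongr
        _ = 4 ^ a * 1 * R ^ (-(a + b)) * (t ^ (-b) * R ^ b) := by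
            rw [rab]; linear_combination (-(t ^ (-b) * (4 ^ a * R ^ (-a)))) * rr b
        _ ≤ 4 ^ a * 4 ^ b * R ^ (-(a + b)) * (t ^ (-b) * R ^ b) := by gcongr
        _ ≤ _ := by
            rw [← e1]; apply mul_le_mul_of_nonneg_left _ hM.le; linarith
    · push Not at c2
      have e1 : (Set.Ioi (1:ℝ)).indicator (fun r : ℝ => r ^ (-(a+b))) (t / R) = t ^ (-(a+b)) * R ^ (a+b) := by
        rw [Set.indicator_of_mem, q (a+b) t ht.le]
        rw [Set.mem_Ioi, lt_div_iff₀ hR]; linarith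
      have e2 : D ^ (-a) ≤ (t/2) ^ (-a) :=
        Real.rpow_le_rpow_of_nonpos (by positivity) (h3 c2) (by linarith)
      rw [q2] at e2
      have f2 : (2:ℝ) ^ a ≤ 4 ^ a := Real.rpow_le_rpow (by norm_num) (by norm_num) ha.le
      calc D ^ (-a) * J ^ (-(b/2)) ≤ (2 ^ a * t ^ (-a)) * t ^ (-b) := by gcongr
        _ = 2 ^ a * 1 * R ^ (-(a + b)) * (t ^ (-(a+b)) * R ^ (a+b)) := by
            rw [tab]; linear_combination (-(t ^ (-b) * (2 ^ a * t ^ (-a)))) * rr (a+b)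
        _ ≤ 4 ^ a * 4 ^ b * R ^ (-(a + b)) * (t ^ (-(a+b)) * R ^ (a+b)) := by gcongr
        _ ≤ _ := by
            rw [← e1]; apply mul_le_mul_of_nonneg_left _ hM.le; linarith

lemma key (n : ℕ) (hn : 3 ≤ n) (a b : ℝ) (ha : 0 < a) (hb : 0 < b) (han : a < n) (hbn : b < n)
    (hab : n < a + b) : ∃ C : ℝ, 0 ≤ C ∧ ∀ x : EuclideanSpace ℝ (Fin n),
    ∫⁻ y : EuclideanSpace ℝ (Fin n), ENNReal.ofReal (‖x - y‖ ^ (-a) * (1 + ‖y‖ ^ 2) ^ (-(b/2))) ≤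
      ENNReal.ofReal (C * (1 + ‖x‖ ^ 2) ^ ((n - a - b) / 2)) := by
  have : Nontrivial (EuclideanSpace ℝ (Fin n)) := by
    apply Module.nontrivial_of_finrank_pos (R := ℝ); simp; omega
  set h1 : ℝ → ℝ := (Set.Iio (2:ℝ)).indicator (fun r : ℝ => r ^ (-a)) with h1d
  set h2 : ℝ → ℝ := (Set.Iio (2:ℝ)).indicator (fun r : ℝ => r ^ (-b)) with h2d
  set h3 : ℝ → ℝ := (Set.Ioi (1:ℝ)).indicator (fun r : ℝ => r ^ (-(a+b))) with h3d
  have p1 : ∀ r, 0 ≤ r → 0 ≤ h1 r := fun r hr => Set.indicator_apply_nonneg fun _ => by positivity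
  have p2 : ∀ r, 0 ≤ r → 0 ≤ h2 r := fun r hr => Set.indicator_apply_nonneg fun _ => by positivity
  have p3 : ∀ r, 0 ≤ r → 0 ≤ h3 r := fun r hr => Set.indicator_apply_nonneg fun _ => by positivity
  have m1 : Measurable h1 := Measurable.indicator (by fun_prop) measurableSet_Iio
  have m2 : Measurable h2 := Measurable.indicator (by fun_prop) measurableSet_Iio
  have m3 : Measurable h3 := Measurable.indicator (by fun_prop) measurableSet_Ioi
  have s1 := aux_scale_s12 n h1 p1 (aux_in n hn a han)
  have s2 := aux_scale_s12 n h2 p2 (aux_in n hn b hbn)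
  have s3 := aux_scale_s12 n h3 p3 (aux_out n hn (a+b) hab)
  have I1 : 0 ≤ ∫ y : EuclideanSpace ℝ (Fin n), h1 ‖y‖ := integral_nonneg fun y => p1 _ (norm_nonneg _)
  have I2 : 0 ≤ ∫ y : EuclideanSpace ℝ (Fin n), h2 ‖y‖ := integral_nonneg fun y => p2 _ (norm_nonneg _)
  have I3 : 0 ≤ ∫ y : EuclideanSpace ℝ (Fin n), h3 ‖y‖ := integral_nonneg fun y => p3 _ (norm_nonneg _)
  generalize (∫ y : EuclideanSpace ℝ (Fin n), h1 ‖y‖) = K1 at *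
  generalize (∫ y : EuclideanSpace ℝ (Fin n), h2 ‖y‖) = K2 at *
  generalize (∫ y : EuclideanSpace ℝ (Fin n), h3 ‖y‖) = K3 at *
  refine ⟨4 ^ a * 4 ^ b * (K1 + K2 + K3), by positivity, fun x => ?_⟩
  set R := Real.sqrt (1 + ‖x‖ ^ 2) with hRd
  have hR2 : R ^ 2 = 1 + ‖x‖ ^ 2 := Real.sq_sqrt (by positivity)
  have hR : 0 < R := Real.sqrt_pos.2 (by positivity)
  have hxR : ‖x‖ ≤ R := Real.le_sqrt_of_sq_le (by linarith)
  have hxR1 : R ≤ 1 + ‖x‖ := by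
    apply Real.sqrt_le_iff.2; constructor
    · positivity
    · nlinarith [norm_nonneg x]
  have hM : 0 ≤ (4:ℝ) ^ a * 4 ^ b * R ^ (-(a + b)) := by positivity
  calc _ ≤ ∫⁻ y : EuclideanSpace ℝ (Fin n), ENNReal.ofReal (4 ^ a * 4 ^ b * R ^ (-(a + b))) *
        (ENNReal.ofReal (h1 (‖x - y‖ / R)) + ENNReal.ofReal (h2 (‖0 - y‖ / R)) +
          ENNReal.ofReal (h3 (‖0 - y‖ / R))) := by
        apply lintegral_mono_ae
        filter_upwards [compl_mem_ae_iff.2 (measure_singleton (0 : EuclideanSpace ℝ (Fin n)))] with y hy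
        have hy0 : 0 < ‖y‖ := norm_pos_iff.2 hy
        have n1 := norm_sub_norm_le x y
        have n2 := norm_sub_norm_le y x
        rw [norm_sub_rev y x] at n2
        have g1 : 0 ≤ ‖x - y‖ / R := by positivity
        have g2 : 0 ≤ ‖0 - y‖ / R := by positivity
        rw [← ENNReal.ofReal_add (p1 _ g1) (p2 _ g2),
          ← ENNReal.ofReal_add (add_nonneg (p1 _ g1) (p2 _ g2)) (p3 _ g2), ← ENNReal.ofReal_mul hM]
        apply ENNReal.ofReal_le_ofReal
        rw [zero_sub, norm_neg]
        apply aux_point a b _ _ R _ ha hb (norm_nonneg _) hy0 hR (by linarith)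
        · intro h
          have : 3 / 4 * R ≤ 1 + ‖y‖ := by linarith
          nlinarith [sq_nonneg (1 - ‖y‖)]
        · intro h; linarith
    _ = ENNReal.ofReal (4 ^ a * 4 ^ b * R ^ (-(a + b)) * (R ^ n * K1 + R ^ n * K2 + R ^ n * K3)) := by
        rw [lintegral_const_mul _ (by fun_prop), lintegral_add_left (by fun_prop),
          lintegral_add_left (by fun_prop), s1 R hR x, s2 R hR 0, s3 R hR 0,
          ENNReal.ofReal_mul hM, ENNReal.ofReal_add (by positivity) (by positivity),
          ENNReal.ofReal_add (by positivity) (by positivity)]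
    _ = _ := by
        congr 1
        have : (1 + ‖x‖ ^ 2) ^ ((n - a - b) / 2) = R ^ (-(a+b)) * R ^ n := by
          rw [← hR2, ← Real.rpow_natCast, ← Real.rpow_natCast, ← Real.rpow_mul hR.le, ← Real.rpow_add hR]
          congr 1; push_cast; ring
        rw [this]; ring

lemma core (n : ℕ) (hn : 3 ≤ n) (a s s' : ℝ) (ha : 0 < a) (han : a < n)
    (hs : n / 2 - a < s) (hs' : n / 2 - a < s') (hss : s + s' = n - a) :
    ∃ C > (0 : ℝ), ∀ f g : EuclideanSpace ℝ (Fin n) → ℂ,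
      MemLp f 2 → MemLp g 2 →
      (∫⁻ p : EuclideanSpace ℝ (Fin n) × EuclideanSpace ℝ (Fin n),
          ENNReal.ofReal (‖f p.1‖ * ‖g p.2‖ * ((1 + ‖p.1‖ ^ 2) ^ (-(s' / 2)) * ‖p.1 - p.2‖ ^ (-a) *
              (1 + ‖p.2‖ ^ 2) ^ (-(s / 2))))) ≤
        ENNReal.ofReal C * eLpNorm f 2 volume * eLpNorm g 2 volume := by
  obtain ⟨C1, hC1, H1⟩ := key n hn a (s + n / 2) ha (by linarith) han (by linarith) (by linarith)
  obtain ⟨C2, hC2, H2⟩ := key n hn a (s' + n / 2) ha (by linarith) han (by linarith) (by linarith)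
  set C := C1 + C2 + 1 with hCd
  have hC : 0 < C := by positivity
  refine ⟨C, hC, fun f g hf hg => ?_⟩
  have pow2 : ∀ u v w p q r : ℝ, 0 < u → 0 ≤ v → 0 < w → 
      ENNReal.ofReal (u ^ p * (v ^ q * w ^ r)) ^ (2:ℝ) =
      ENNReal.ofReal (u ^ (2 * p)) * ENNReal.ofReal (v ^ (2 * q) * w ^ (2 * r)) := by
    intro u v w p q r hu hv hw
    rw [ENNReal.ofReal_rpow_of_nonneg (by positivity) (by norm_num), ← ENNReal.ofReal_mul (by positivity)]
    congr 1
    rw [Real.mul_rpow (by positivity) (by positivity), Real.mul_rpow (by positivity) (by positivity),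
      ← Real.rpow_mul hu.le, ← Real.rpow_mul hv, ← Real.rpow_mul hw.le]
    ring_nf
  have fin : ∀ (D e t : ℝ) (x : EuclideanSpace ℝ (Fin n)), 0 ≤ D → D ≤ C → e + t = 0 → 
      ENNReal.ofReal ((1 + ‖x‖^2) ^ e) * ENNReal.ofReal (D * (1 + ‖x‖^2) ^ t) ≤ ENNReal.ofReal C := by
    intro D e t x hD hDC het
    rw [← ENNReal.ofReal_mul (by positivity)]
    apply ENNReal.ofReal_le_ofReal
    have : (1 + ‖x‖^2) ^ e * (1 + ‖x‖^2) ^ t = 1 := by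
      rw [← Real.rpow_add (by positivity), het, Real.rpow_zero]
    calc _ = D * ((1 + ‖x‖^2) ^ e * (1 + ‖x‖^2) ^ t) := by ring
      _ ≤ C := by rw [this]; linarith
  have S := schur (volume : Measure (EuclideanSpace ℝ (Fin n))) (fun x => ‖f x‖ₑ) (fun x => ‖g x‖ₑ)
    hf.1.enorm hg.1.enorm
    (fun p => ENNReal.ofReal ((1 + ‖p.1‖ ^ 2) ^ ((n / 2 - s') / 4) *
      (‖p.1 - p.2‖ ^ (-(a / 2)) * (1 + ‖p.2‖ ^ 2) ^ (-((s + n / 2) / 4)))))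
    (fun p => ENNReal.ofReal ((1 + ‖p.2‖ ^ 2) ^ ((n / 2 - s) / 4) *
      (‖p.1 - p.2‖ ^ (-(a / 2)) * (1 + ‖p.1‖ ^ 2) ^ (-((s' + n / 2) / 4)))))
    (by fun_prop) (by fun_prop) (ENNReal.ofReal C) (ENNReal.ofReal C)
    (by
      intro x
      simp_rw [fun y : EuclideanSpace ℝ (Fin n) => pow2 (1 + ‖x‖^2) ‖x - y‖ (1 + ‖y‖^2)
        ((n / 2 - s') / 4) (-(a / 2)) (-((s + n / 2) / 4)) (by positivity) (by positivity) (by positivity)]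
      rw [lintegral_const_mul _ (by fun_prop), show 2 * (-(a / 2)) = -a by ring,
        show 2 * (-((s + n / 2) / 4)) = -((s + n / 2) / 2) by ring]
      refine le_trans ?_ (fin C1 (2 * ((n / 2 - s') / 4)) ((n - a - (s + n / 2)) / 2) x hC1
        (by linarith) (by linarith))
      gcongr
      exact H1 x)
    (by
      intro y
      simp_rw [fun x : EuclideanSpace ℝ (Fin n) => pow2 (1 + ‖y‖^2) ‖x - y‖ (1 + ‖x‖^2)
        ((n / 2 - s) / 4) (-(a / 2)) (-((s' + n / 2) / 4)) (by positivity) (by positivity) (by positivity)]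
      rw [lintegral_const_mul _ (by fun_prop), show 2 * (-(a / 2)) = -a by ring,
        show 2 * (-((s' + n / 2) / 4)) = -((s' + n / 2) / 2) by ring]
      refine le_trans ?_ (fin C2 (2 * ((n / 2 - s) / 4)) ((n - a - (s' + n / 2)) / 2) y hC2
        (by linarith) (by linarith))
      gcongr
      simp_rw [norm_sub_rev _ y]
      exact H2 y)
  have nf : ∀ h : EuclideanSpace ℝ (Fin n) → ℂ,
      (∫⁻ x, ‖h x‖ₑ ^ (2:ℝ)) ^ (1 / (2:ℝ)) = eLpNorm h 2 volume := fun h => by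
    rw [eLpNorm_eq_lintegral_rpow_enorm_toReal (by norm_num) (by norm_num)]; simp
  rw [ENNReal.mul_rpow_of_nonneg _ _ (by norm_num), ENNReal.mul_rpow_of_nonneg _ _ (by norm_num),
    nf, nf] at S
  have hCC : ENNReal.ofReal C ^ (1 / (2:ℝ)) * ENNReal.ofReal C ^ (1 / (2:ℝ)) = ENNReal.ofReal C := by
    rw [← ENNReal.rpow_add_of_nonneg _ _ (by norm_num) (by norm_num)]; norm_num
  refine (le_of_eq ?_).trans (S.trans (le_of_eq ?_))
  · rw [Measure.volume_eq_prod]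
    refine lintegral_congr fun p => ?_
    rw [← ofReal_norm, ← ofReal_norm, ← ENNReal.ofReal_mul (by positivity),
      ← ENNReal.ofReal_mul (by positivity), ← ENNReal.ofReal_mul (by positivity)]
    congr 1
    have e1 : (1 + ‖p.1‖ ^ 2) ^ (-(s' / 2)) =
        (1 + ‖p.1‖ ^ 2) ^ ((n / 2 - s') / 4) * (1 + ‖p.1‖ ^ 2) ^ (-((s' + n / 2) / 4)) := by
      rw [← Real.rpow_add (by positivity)]; congr 1; ring
    have e2 : (1 + ‖p.2‖ ^ 2) ^ (-(s / 2)) =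
        (1 + ‖p.2‖ ^ 2) ^ ((n / 2 - s) / 4) * (1 + ‖p.2‖ ^ 2) ^ (-((s + n / 2) / 4)) := by
      rw [← Real.rpow_add (by positivity)]; congr 1; ring
    have e3 : ‖p.1 - p.2‖ ^ (-a) = ‖p.1 - p.2‖ ^ (-(a/2)) * ‖p.1 - p.2‖ ^ (-(a/2)) := by
      rw [← pow_two, ← Real.rpow_mul_natCast (by positivity)]; congr 1; push_cast; ring
    rw [e1, e2, e3]; ring
  · calc _ = (ENNReal.ofReal C ^ (1 / (2:ℝ)) * ENNReal.ofReal C ^ (1 / (2:ℝ))) *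
          eLpNorm f 2 volume * eLpNorm g 2 volume := by ring
      _ = _ := by rw [hCC]

/-- Boundedness on `L²(ℝⁿ)` of `⟨x⟩^{−s'} A_{2k} ⟨x⟩^{−s}` where `A_{2k}` has kernel
`|x−y|^{2k−(n−2)}`, for `n ≥ 3`, `2k + 2 < n`, `s, s' > (4−n)/2 + 2k`, `s + s' ≥ 2k + 2`. -/
theorem stmt_12 (n : ℕ) (hn : 3 ≤ n) (k : ℕ) (hk : 2 * k + 2 < n) (s s' : ℝ)
    (hs : s > (4 - (n : ℝ)) / 2 + 2 * k) (hs' : s' > (4 - (n : ℝ)) / 2 + 2 * k)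
    (hss' : s + s' ≥ 2 * k + 2) :
    ∃ C > (0 : ℝ), ∀ f g : EuclideanSpace ℝ (Fin n) → ℂ,
      MemLp f 2 → MemLp g 2 →
      (∫⁻ p : EuclideanSpace ℝ (Fin n) × EuclideanSpace ℝ (Fin n),
          ENNReal.ofReal (‖f p.1‖ * ‖g p.2‖ /
            ((1 + ‖p.1‖ ^ 2) ^ (s' / 2) * ‖p.1 - p.2‖ ^ ((n : ℝ) - 2 - 2 * k) *
              (1 + ‖p.2‖ ^ 2) ^ (s / 2)))) ≤
        ENNReal.ofReal C * eLpNorm f 2 volume * eLpNorm g 2 volume := by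
  have hkn : (2 * k + 2 : ℝ) < n := by exact_mod_cast hk
  have hk0 : (0:ℝ) ≤ k := Nat.cast_nonneg k
  obtain ⟨s0, h1, h2, h3, h4⟩ : ∃ s0 : ℝ, s0 ≤ s ∧ (2 * k + 2) - s0 ≤ s' ∧
      (2 * k + 2) - (n:ℝ) / 2 < s0 ∧ s0 < (n:ℝ) / 2 := by
    refine ⟨max ((2 * k + 2) - s') (min s (k + 1)), max_le (by linarith) (min_le_left _ _), ?_, ?_, ?_⟩
    · linarith [le_max_left ((2 * k + 2) - s') (min s (k + 1))]
    · exact lt_max_of_lt_right (lt_min (by linarith) (by linarith))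
    · exact max_lt (by linarith) ((min_le_right _ _).trans_lt (by linarith))
  obtain ⟨C, hC, H⟩ := core n hn ((n : ℝ) - 2 - 2 * k) s0 ((2 * k + 2) - s0) (by linarith)
    (by linarith) (by linarith) (by linarith) (by ring)
  refine ⟨C, hC, fun f g hf hg => (lintegral_mono fun p => ?_).trans (H f g hf hg)⟩
  apply ENNReal.ofReal_le_ofReal
  have j : ∀ (x : EuclideanSpace ℝ (Fin n)) (u v : ℝ), u ≤ v →
      (1 + ‖x‖ ^ 2) ^ (-(v / 2)) ≤ (1 + ‖x‖ ^ 2) ^ (-(u / 2)) := fun x u v huv =>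
    Real.rpow_le_rpow_of_exponent_le (by nlinarith [norm_nonneg x]) (by linarith)
  rw [div_eq_mul_inv, mul_inv, mul_inv, ← Real.rpow_neg (by positivity),
    ← Real.rpow_neg (by positivity), ← Real.rpow_neg (by positivity)]
  gcongr ‖f p.1‖ * ‖g p.2‖ * (?_ * _ * ?_)
  · exact j _ _ _ h2
  · exact j _ _ _ h1
end
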